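/- Let p ≥ 6, u = 2^(−p), and let RN be a symmetric round-to-nearest function whose tie-breaking rule is ties-to-even or ties-to-away. Let x_h, x_l, y_h, y_l ∈ F_p with RN(x_h + x_l) = x_h, RN(y_h + y_l) = y_h, x_h·y_h < 0 and min(|x_h|, |y_h|) > max(|x_h|, |y_h|)/2 (i.e. r(x_h, y_h) > 1/2). Assume |x_h| and |y_h| are not two consecutive floating-point numbers, i.e. either |x_h| = |y_h| or there exists f ∈ F_p with min(|x_h|, |y_h|) < f < max(|x_h|, |y_h|). Then the output of sloppy double-word addition with rounding RN satisfies |z_h + z_l − S| ≤ u·|S|, where S = x_h + x_l + y_h + y_l. -/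

import Mathlib

/-!
The high words have opposite signs and magnitudes within a factor two of each other, so by
Sterbenz' lemma `s_h = x_h + y_h` is exact and `s_l = 0`. What remains is `v = RN(t)` with
`t = x_l + y_l`, followed by Fast2Sum on `(s_h, v)`, which is exact when `s_h = 0` or
`|v| ≤ |s_h|`. The only error is then that of `RN(t)`, at most `u|t|`, and it suffices
to show `|t| ≤ |s_h|` (unless `s_h = 0`) and `|t| ≤ |S|`.

If `|x_h| = |y_h|`, then `s_h = 0` and `S = t`. Otherwise let `b < f < a` be the two magnitudes
and a floating-point number between them, and let `2 ^ e` be the ulp of `b`. All three are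
multiples of `2 ^ e`, so `a - b ≥ 2 * 2 ^ e`, whereas the low words are at most half an ulp each,
that is `2 ^ e / 2` next to `b` and `2 ^ e` next to `a ≤ 2 * b`; hence `|t| ≤ a - b = |s_h|`.
Moreover no low word carries its operand past the midpoint between `f` and its high word, so
`|S| ≥ (a - b) / 2`, and with `|t| ≤ |s_h|` this gives `|t| ≤ |S|`.
-/

/-- The radix-2, precision-`p` floating-point numbers with unlimited exponent range. -/
def Fp (p : ℕ) : Set ℝ := {x : ℝ | ∃ M e : ℤ, |M| ≤ 2 ^ p - 1 ∧ x = (M : ℝ) * (2 : ℝ) ^ e}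

/-- Round toward `-∞`: the largest floating-point number `≤ x`. -/
noncomputable def RD (p : ℕ) (x : ℝ) : ℝ := sSup {f : ℝ | f ∈ Fp p ∧ f ≤ x}

/-- Round toward `+∞`: the smallest floating-point number `≥ x`. -/
noncomputable def RU (p : ℕ) (x : ℝ) : ℝ := sInf {f : ℝ | f ∈ Fp p ∧ x ≤ f}

/-- `y` is a faithful rounding of `x`. -/
def Faithful (p : ℕ) (x y : ℝ) : Prop := y = RD p x ∨ y = RU p x

/-- `RN` is a round-to-nearest function for precision `p`. -/
def IsRN (p : ℕ) (RN : ℝ → ℝ) : Prop :=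
  (∀ x : ℝ, RN x ∈ Fp p) ∧ ∀ x f : ℝ, f ∈ Fp p → |RN x - x| ≤ |f - x|

/-- `RN` is symmetric. -/
def SymRN (RN : ℝ → ℝ) : Prop := ∀ x : ℝ, RN (-x) = -RN x

/-- A nonzero `f ∈ F_p` is *even* if `f · 2^(-e_f)` is an even integer, where
`e_f = ⌊log₂ |f|⌋ - p + 1`; `0` is even. -/
def FpEven (p : ℕ) (f : ℝ) : Prop :=
  f = 0 ∨ ∃ m : ℤ, Even m ∧ f = (m : ℝ) * (2 : ℝ) ^ (Int.log 2 |f| - (p : ℤ) + 1)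

/-- `RN` breaks ties to even. -/
def TiesToEven (p : ℕ) (RN : ℝ → ℝ) : Prop :=
  ∀ x : ℝ, RD p x ≠ RU p x → |x - RD p x| = |RU p x - x| →
    (RN x = RD p x ∨ RN x = RU p x) ∧ FpEven p (RN x)

/-- `RN` breaks ties away from zero. -/
def TiesToAway (p : ℕ) (RN : ℝ → ℝ) : Prop :=
  ∀ x : ℝ, RD p x ≠ RU p x → |x - RD p x| = |RU p x - x| →
    (RN x = RD p x ∨ RN x = RU p x) ∧ |RN x| = max |RD p x| |RU p x|

/-- Sloppy double-word addition with rounding function `R`. -/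
noncomputable def sloppyAdd (R : ℝ → ℝ) (xh xl yh yl : ℝ) : ℝ × ℝ :=
  let sh := R (xh + yh)
  let a' := R (sh - yh)
  let b' := R (sh - a')
  let sl := R (R (xh - a') + R (yh - b'))
  let v := R (xl + yl)
  let w := R (sl + v)
  let zh := R (sh + w)
  let d := R (zh - sh)
  let zl := R (w - d)
  (zh, zl)

/-- The additive group `2 ^ e * ℤ` of integer multiples of `2 ^ e`. Representing floating-point
numbers over a common exponent is expressed as membership in a common grid. -/
noncomputable def grid (e : ℤ) : AddSubgroup ℝ := AddSubgroup.zmultiples ((2 : ℝ) ^ e)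

/-- `s` is a nearest precision-`p` floating-point number to `x`. Both candidates qualify at a tie;
in particular the relation is invariant under `(x, s) ↦ (-x, -s)`, even where the rounding function
in use is not symmetric. -/
def IsNearest (p : ℕ) (x s : ℝ) : Prop := s ∈ Fp p ∧ ∀ f ∈ Fp p, |s - x| ≤ |f - x|

lemma abs_add_eq_abs_abs_sub_abs {R : Type*} [Ring R] [LinearOrder R] [IsStrictOrderedRing R]
    {a b : R} (hab : a * b ≤ 0) : |a + b| = |(|a| - |b|)| := by
  rcases mul_nonpos_iff.mp hab with ⟨ha, hb⟩ | ⟨ha, hb⟩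
  · rw [abs_of_nonneg ha, abs_of_nonpos hb, sub_neg_eq_add]
  · rw [abs_of_nonpos ha, abs_of_nonneg hb, ← abs_neg, neg_add, sub_eq_add_neg]

section

variable {p : ℕ} {d e : ℤ} {a b f s x y : ℝ}

/-! ### Grids -/

lemma mem_grid_iff : x ∈ grid e ↔ ∃ M : ℤ, (M : ℝ) * 2 ^ e = x := by
  simp [grid, AddSubgroup.mem_zmultiples_iff]

lemma grid_antitone : Antitone grid := by
  intro d e hde
  obtain ⟨n, rfl⟩ := Int.le.dest hde
  refine AddSubgroup.zmultiples_le.mpr (mem_grid_iff.mpr ⟨2 ^ n, ?_⟩)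
  rw [zpow_add₀ two_ne_zero, zpow_natCast, mul_comm]
  push_cast
  rfl

lemma zpow_mem_grid (hde : d ≤ e) : (2 : ℝ) ^ e ∈ grid d :=
  grid_antitone hde (AddSubgroup.mem_zmultiples _)

lemma add_zpow_le_of_mem_grid_of_lt (hx : x ∈ grid e) (hy : y ∈ grid e) (hxy : x < y) :
    x + 2 ^ e ≤ y := by
  obtain ⟨M, rfl⟩ := mem_grid_iff.mp hx
  obtain ⟨N, rfl⟩ := mem_grid_iff.mp hy
  have hMN : M + 1 ≤ N := by exact_mod_cast lt_of_mul_lt_mul_right hxy (by positivity)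
  have hMN' : (M : ℝ) + 1 ≤ N := by exact_mod_cast hMN
  calc (M : ℝ) * 2 ^ e + 2 ^ e = (M + 1) * 2 ^ e := by ring
    _ ≤ N * 2 ^ e := by gcongr

lemma exists_mem_grid_abs_sub_le (e : ℤ) (x : ℝ) : ∃ g ∈ grid e, |g - x| ≤ 2 ^ e / 2 := by
  have he : (0 : ℝ) < 2 ^ e := by positivity
  refine ⟨round (x / 2 ^ e) * 2 ^ e, mem_grid_iff.mpr ⟨_, rfl⟩, ?_⟩
  calc |round (x / 2 ^ e) * 2 ^ e - x| = |x / 2 ^ e - round (x / 2 ^ e)| * 2 ^ e := by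
        rw [abs_sub_comm, ← abs_of_pos he, ← abs_mul, abs_of_pos he, sub_mul,
          div_mul_cancel₀ _ he.ne']
    _ ≤ 1 / 2 * 2 ^ e := by gcongr; exact abs_sub_round _
    _ = 2 ^ e / 2 := by ring

lemma exists_zpow_le_abs_lt (p : ℤ) (hx : x ≠ 0) :
    ∃ e : ℤ, (2 : ℝ) ^ (p - 1 + e) ≤ |x| ∧ |x| < 2 ^ (p + e) := by
  refine ⟨Int.log 2 |x| - (p - 1), ?_, ?_⟩
  · rw [add_sub_cancel]
    exact_mod_cast Int.zpow_log_le_self one_lt_two (abs_pos.mpr hx)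
  · rw [show p + (Int.log 2 |x| - (p - 1)) = Int.log 2 |x| + 1 by ring]
    exact_mod_cast Int.lt_zpow_succ_log_self one_lt_two |x|

/-! ### Floating-point numbers -/

lemma mem_Fp_iff : x ∈ Fp p ↔ ∃ e : ℤ, x ∈ grid e ∧ |x| < 2 ^ ((p : ℤ) + e) := by
  have abs_lt_iff (M e : ℤ) : |(M : ℝ) * 2 ^ e| < 2 ^ ((p : ℤ) + e) ↔ |M| ≤ 2 ^ p - 1 := by
    rw [zpow_add₀ two_ne_zero, zpow_natCast, abs_mul, abs_of_pos (by positivity : (0 : ℝ) < 2 ^ e),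
      mul_lt_mul_iff_left₀ (by positivity), Int.le_sub_one_iff]
    exact_mod_cast Iff.rfl
  constructor
  · rintro ⟨M, e, hM, rfl⟩
    exact ⟨e, mem_grid_iff.mpr ⟨M, rfl⟩, (abs_lt_iff M e).mpr hM⟩
  · rintro ⟨e, hx, hxe⟩
    obtain ⟨M, rfl⟩ := mem_grid_iff.mp hx
    exact ⟨M, e, (abs_lt_iff M e).mp hxe, rfl⟩

lemma zero_mem_Fp (p : ℕ) : (0 : ℝ) ∈ Fp p :=
  mem_Fp_iff.mpr ⟨0, zero_mem _, by simp only [abs_zero]; positivity⟩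

lemma neg_mem_Fp (hx : x ∈ Fp p) : -x ∈ Fp p := by
  obtain ⟨e, hx, hxe⟩ := mem_Fp_iff.mp hx
  exact mem_Fp_iff.mpr ⟨e, neg_mem hx, by rwa [abs_neg]⟩

lemma abs_mem_Fp (hx : x ∈ Fp p) : |x| ∈ Fp p := by
  rcases abs_choice x with h | h <;> rw [h]
  exacts [hx, neg_mem_Fp hx]

lemma mul_zpow_mem_Fp (hx : x ∈ Fp p) (k : ℤ) : x * 2 ^ k ∈ Fp p := by
  obtain ⟨M, e, hM, rfl⟩ := hx
  exact ⟨M, e + k, hM, by rw [zpow_add₀ two_ne_zero, mul_assoc]⟩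

lemma ne_zero_of_mem_Fp (hx : x ∈ Fp p) (hx0 : x ≠ 0) : p ≠ 0 := by
  rintro rfl
  obtain ⟨M, e, hM, rfl⟩ := hx
  have : M = 0 := abs_nonpos_iff.mp (by simpa using hM)
  simp [this] at hx0

lemma zpow_mem_Fp (hp : p ≠ 0) (e : ℤ) : (2 : ℝ) ^ e ∈ Fp p := by
  refine mem_Fp_iff.mpr ⟨e, zpow_mem_grid le_rfl, ?_⟩
  rw [abs_of_pos (by positivity)]
  exact zpow_lt_zpow_right₀ one_lt_two (by omega)

lemma mem_Fp_of_mem_grid_of_abs_le (hp : p ≠ 0) (hx : x ∈ grid e)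
    (hxe : |x| ≤ 2 ^ ((p : ℤ) + e)) : x ∈ Fp p := by
  rcases hxe.lt_or_eq with hlt | heq
  · exact mem_Fp_iff.mpr ⟨e, hx, hlt⟩
  · have hmem := zpow_mem_Fp hp (p + e)
    rcases eq_or_eq_neg_of_abs_eq heq with rfl | rfl
    exacts [hmem, neg_mem_Fp hmem]

lemma mem_grid_of_mem_Fp_of_zpow_le (hx : x ∈ Fp p) (hxe : (2 : ℝ) ^ ((p : ℤ) - 1 + e) ≤ |x|) :
    x ∈ grid e := by
  obtain ⟨k, hx, hxk⟩ := mem_Fp_iff.mp hx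
  have hlt := (zpow_lt_zpow_iff_right₀ one_lt_two).mp (hxe.trans_lt hxk)
  exact grid_antitone (by omega) hx

lemma add_mem_Fp_of_abs_le (ha : a ∈ Fp p) (hb : b ∈ Fp p) (hle_a : |a + b| ≤ |a|)
    (hle_b : |a + b| ≤ |b|) : a + b ∈ Fp p := by
  obtain ⟨d, ha, had⟩ := mem_Fp_iff.mp ha
  obtain ⟨e, hb, hbe⟩ := mem_Fp_iff.mp hb
  rcases le_total d e with hde | hed
  · exact mem_Fp_iff.mpr ⟨d, add_mem ha (grid_antitone hde hb), hle_a.trans_lt had⟩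
  · exact mem_Fp_iff.mpr ⟨e, add_mem (grid_antitone hed ha) hb, hle_b.trans_lt hbe⟩

/-- Sterbenz' lemma. -/
lemma add_mem_Fp_of_mul_nonpos (ha : a ∈ Fp p) (hb : b ∈ Fp p) (hab : a * b ≤ 0)
    (hle_a : |a| ≤ 2 * |b|) (hle_b : |b| ≤ 2 * |a|) : a + b ∈ Fp p := by
  apply add_mem_Fp_of_abs_le ha hb <;> rw [abs_add_eq_abs_abs_sub_abs hab, abs_le] <;>
    constructor <;> linarith

/-! ### Nearest floating-point numbers -/

namespace IsNearest

protected lemma neg (h : IsNearest p x s) : IsNearest p (-x) (-s) := by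
  refine ⟨neg_mem_Fp h.1, fun f hf => ?_⟩
  calc |-s - -x| = |s - x| := by rw [neg_sub_neg, abs_sub_comm]
    _ ≤ |-f - x| := h.2 _ (neg_mem_Fp hf)
    _ = |f - -x| := by rw [← abs_neg]; ring_nf

lemma eq_of_mem (h : IsNearest p x s) (hx : x ∈ Fp p) : s = x := by
  have := h.2 x hx
  rwa [sub_self, abs_zero, abs_nonpos_iff, sub_eq_zero] at this

lemma midpoint_le (h : IsNearest p x s) (hf : f ∈ Fp p) (hfs : f < s) : (f + s) / 2 ≤ x := by
  have hle := (le_abs_self _).trans (h.2 f hf)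
  rcases le_abs.mp hle with h' | h' <;> linarith

lemma le_midpoint (h : IsNearest p x s) (hf : f ∈ Fp p) (hsf : s < f) : x ≤ (s + f) / 2 := by
  linarith [h.neg.midpoint_le (neg_mem_Fp hf) (neg_lt_neg hsf)]

lemma ge_of_ge (h : IsNearest p x s) (hf : f ∈ Fp p) (hfx : f ≤ x) : f ≤ s := by
  by_contra! hsf
  linarith [h.le_midpoint hf hsf]

lemma le_of_le (h : IsNearest p x s) (hf : f ∈ Fp p) (hxf : x ≤ f) : s ≤ f :=
  neg_le_neg_iff.mp (h.neg.ge_of_ge (neg_mem_Fp hf) (neg_le_neg hxf))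

protected lemma le_abs (h : IsNearest p x s) (hf : f ∈ Fp p) (hfx : f ≤ |x|) : f ≤ |s| := by
  rcases le_abs.mp hfx with hx | hx
  · exact (h.ge_of_ge hf hx).trans (le_abs_self s)
  · exact (h.neg.ge_of_ge hf hx).trans (neg_le_abs s)

protected lemma abs_le (h : IsNearest p x s) (hf : f ∈ Fp p) (hxf : |x| ≤ f) : |s| ≤ f :=
  abs_le'.mpr ⟨h.le_of_le hf ((le_abs_self x).trans hxf),
    h.neg.le_of_le hf ((neg_le_abs x).trans hxf)⟩

lemma mem_grid (hp : p ≠ 0) (h : IsNearest p x s) (hx : x ∈ grid e) : s ∈ grid e := by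
  rcases le_total |x| (2 ^ ((p : ℤ) + e)) with hle | hge
  · rwa [h.eq_of_mem (mem_Fp_of_mem_grid_of_abs_le hp hx hle)]
  · refine mem_grid_of_mem_Fp_of_zpow_le h.1 (le_trans ?_ (h.le_abs (zpow_mem_Fp hp _) hge))
    exact zpow_le_zpow_right₀ one_le_two (by omega)

lemma abs_sub_le (hp : p ≠ 0) (h : IsNearest p x s) (hx : |x| ≤ 2 ^ ((p : ℤ) + e)) :
    |s - x| ≤ 2 ^ e / 2 := by
  obtain ⟨g, hg, hgx⟩ := exists_mem_grid_abs_sub_le e x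
  refine (h.2 g (mem_Fp_of_mem_grid_of_abs_le hp hg ?_)).trans hgx
  by_contra! hlt
  have hgap := add_zpow_le_of_mem_grid_of_lt (zpow_mem_grid (by omega)) (abs_mem_iff.mpr hg) hlt
  linarith [abs_sub_abs_le_abs_sub g x, zpow_pos (two_pos : (0 : ℝ) < 2) e]

lemma abs_sub_le_of_abs_lt (hp : p ≠ 0) (h : IsNearest p x s)
    (hs : |s| < 2 ^ ((p : ℤ) + e)) : |s - x| ≤ 2 ^ e / 2 :=
  h.abs_sub_le hp <| le_of_not_ge fun hx => (h.le_abs (zpow_mem_Fp hp _) hx).not_gt hs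

lemma abs_sub_le_mul_abs (hp : p ≠ 0) (h : IsNearest p x s) :
    |s - x| ≤ 2 ^ (-(p : ℤ)) * |x| := by
  rcases eq_or_ne x 0 with rfl | hx
  · simp [h.eq_of_mem (zero_mem_Fp p)]
  obtain ⟨e, hle, hlt⟩ := exists_zpow_le_abs_lt (p : ℤ) hx
  calc |s - x| ≤ 2 ^ e / 2 := h.abs_sub_le hp hlt.le
    _ = 2 ^ (-(p : ℤ)) * 2 ^ ((p : ℤ) - 1 + e) := by
      rw [← zpow_add₀ two_ne_zero, show -(p : ℤ) + (p - 1 + e) = e - 1 by ring,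
        zpow_sub_one₀ two_ne_zero, div_eq_mul_inv]
    _ ≤ 2 ^ (-(p : ℤ)) * |x| := by gcongr

lemma half_sub_le_sub (hx : IsNearest p x a) (hy : IsNearest p y b) (hf : f ∈ Fp p) (hbf : b < f)
    (hfa : f < a) : (a - b) / 2 ≤ x - y := by
  linarith [hx.midpoint_le hf hfa, hy.le_midpoint hf hbf]

lemma abs_sub_add_abs_sub_le_of_between (hx : IsNearest p x a) (hy : IsNearest p y b)
    (hf : f ∈ Fp p) (hbf : |b| < f) (hfa : f < |a|) (hab : |a| ≤ 2 * |b|) :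
    |a - x| + |b - y| ≤ |a| - |b| := by
  have hb0 : 0 < |b| := by linarith
  have hp : p ≠ 0 := ne_zero_of_mem_Fp hf (hb0.trans hbf).ne'
  obtain ⟨e, hbe, hbe'⟩ := exists_zpow_le_abs_lt (p : ℤ) (abs_pos.mp hb0)
  have hgrid {g : ℝ} (hg : g ∈ Fp p) (hbg : |b| ≤ g) : g ∈ grid e :=
    mem_grid_of_mem_Fp_of_zpow_le hg ((hbe.trans hbg).trans (le_abs_self g))
  have hbf_gap : |b| + 2 ^ e ≤ f :=
    add_zpow_le_of_mem_grid_of_lt (hgrid (abs_mem_Fp hy.1) le_rfl) (hgrid hf hbf.le) hbf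
  have hfa_gap : f + 2 ^ e ≤ |a| :=
    add_zpow_le_of_mem_grid_of_lt (hgrid hf hbf.le) (hgrid (abs_mem_Fp hx.1) (hbf.trans hfa).le) hfa
  have hy_err : |b - y| ≤ 2 ^ e / 2 := hy.abs_sub_le_of_abs_lt hp hbe'
  have hx_err : |a - x| ≤ 2 ^ (e + 1) / 2 := by
    refine hx.abs_sub_le_of_abs_lt hp ?_
    rw [← add_assoc, zpow_add_one₀ two_ne_zero]
    linarith
  rw [zpow_add_one₀ two_ne_zero] at hx_err
  linarith [zpow_pos (two_pos : (0 : ℝ) < 2) e]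

lemma abs_error_le_of_between (hx : IsNearest p x a) (hy : IsNearest p y b) (hf : f ∈ Fp p)
    (hmul : a * b < 0) (hbf : |b| < f) (hfa : f < |a|) (hab : |a| ≤ 2 * |b|) :
    |x + y - (a + b)| ≤ |a + b| ∧ |x + y - (a + b)| ≤ |x + y| := by
  have herr : |x + y - (a + b)| ≤ |a + b| :=
    calc |x + y - (a + b)| = |(a - x) + (b - y)| := by rw [← abs_neg]; ring_nf
      _ ≤ |a - x| + |b - y| := abs_add_le _ _
      _ ≤ |a| - |b| := hx.abs_sub_add_abs_sub_le_of_between hy hf hbf hfa hab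
      _ ≤ |a + b| := abs_add_eq_abs_abs_sub_abs hmul.le ▸ le_abs_self _
  refine ⟨herr, ?_⟩
  rcases mul_neg_iff.mp hmul with ⟨ha, hb⟩ | ⟨ha, hb⟩
  · rw [abs_of_pos ha] at hfa
    rw [abs_of_neg hb] at hbf
    have hhalf := hx.half_sub_le_sub hy.neg hf hbf hfa
    refine (abs_le'.mpr ⟨?_, ?_⟩).trans (le_abs_self _) <;> linarith
  · rw [abs_of_neg ha] at hfa
    rw [abs_of_pos hb] at hbf
    have hhalf := hx.neg.half_sub_le_sub hy hf hbf hfa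
    refine (abs_le'.mpr ⟨?_, ?_⟩).trans (neg_le_abs _) <;> linarith

lemma abs_error_le_of_not_consecutive (hx : IsNearest p x a) (hy : IsNearest p y b)
    (hmul : a * b < 0) (hab : |a| ≤ 2 * |b|) (hba : |b| ≤ 2 * |a|)
    (hnotconsec : |a| = |b| ∨ ∃ f ∈ Fp p, min |a| |b| < f ∧ f < max |a| |b|) :
    (a + b = 0 ∨ |x + y - (a + b)| ≤ |a + b|) ∧ |x + y - (a + b)| ≤ |x + y| := by
  rcases hnotconsec with heq | ⟨f, hf, hminf, hfmax⟩
  · have hsum : a + b = 0 := by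
      rw [← abs_eq_zero, abs_add_eq_abs_abs_sub_abs hmul.le, heq, sub_self, abs_zero]
    exact ⟨.inl hsum, by rw [hsum, sub_zero]⟩
  refine (?_ : _ ∧ _).imp_left .inr
  rcases le_total |a| |b| with hle | hle
  · rw [min_eq_left hle] at hminf
    rw [max_eq_right hle] at hfmax
    rw [add_comm x, add_comm a]
    exact hy.abs_error_le_of_between hx hf (mul_comm a b ▸ hmul) hminf hfmax hba
  · rw [min_eq_right hle] at hminf
    rw [max_eq_left hle] at hfmax
    exact hx.abs_error_le_of_between hy hf hmul hminf hfmax hab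

lemma add_sub_mem_Fp (hp : p ≠ 0) (ha : a ∈ Fp p) (hb : b ∈ Fp p) (h : IsNearest p (a + b) s) :
    a + b - s ∈ Fp p := by
  have hle_a : |a + b - s| ≤ |a| := by simpa [abs_sub_comm] using h.2 b hb
  have hle_b : |a + b - s| ≤ |b| := by simpa [abs_sub_comm] using h.2 a ha
  obtain ⟨d, ha, had⟩ := mem_Fp_iff.mp ha
  obtain ⟨e, hb, hbe⟩ := mem_Fp_iff.mp hb
  have hgrid {k : ℤ} (hkd : k ≤ d) (hke : k ≤ e) : a + b - s ∈ grid k :=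
    have hab := add_mem (grid_antitone hkd ha) (grid_antitone hke hb)
    sub_mem hab (h.mem_grid hp hab)
  rcases le_total d e with hde | hed
  · exact mem_Fp_iff.mpr ⟨d, hgrid le_rfl hde, hle_a.trans_lt had⟩
  · exact mem_Fp_iff.mpr ⟨e, hgrid hed le_rfl, hle_b.trans_lt hbe⟩

lemma sub_mem_Fp_of_abs_le (ha : a ∈ Fp p) (hb : b ∈ Fp p) (hba : |b| ≤ |a|)
    (h : IsNearest p (a + b) s) : s - a ∈ Fp p := by
  wlog ha0 : 0 ≤ a generalizing a b s
  · have := this (neg_mem_Fp ha) (neg_mem_Fp hb) (by simpa using hba)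
      (by simpa [add_comm] using h.neg) (by linarith)
    simpa [add_comm, sub_eq_add_neg] using neg_mem_Fp this
  rw [abs_of_nonneg ha0] at hba
  obtain ⟨hab, hba'⟩ := abs_le.mp hba
  -- Sterbenz' lemma applies to `s - a` if `s` is within a factor two of `a`, else to `a + b`
  rcases le_total (-(a / 2)) b with hb2 | hb2
  · have half_mem : a / 2 ∈ Fp p := by simpa [div_eq_mul_inv] using mul_zpow_mem_Fp ha (-1)
    have two_mul_mem : 2 * a ∈ Fp p := by simpa [mul_comm] using mul_zpow_mem_Fp ha 1
    have hs_ge : a / 2 ≤ s := h.ge_of_ge half_mem (by linarith)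
    have hs_le : s ≤ 2 * a := h.le_of_le two_mul_mem (by linarith)
    have hs0 : 0 ≤ s := by linarith
    rw [sub_eq_add_neg]
    apply add_mem_Fp_of_mul_nonpos h.1 (neg_mem_Fp ha)
      (mul_nonpos_of_nonneg_of_nonpos hs0 (neg_nonpos.mpr ha0)) <;>
      rw [abs_neg, abs_of_nonneg ha0, abs_of_nonneg hs0] <;> linarith
  · have hmem : a + b ∈ Fp p := by
      have hb0 : b ≤ 0 := by linarith
      apply add_mem_Fp_of_mul_nonpos ha hb (mul_nonpos_of_nonneg_of_nonpos ha0 hb0) <;>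
        rw [abs_of_nonneg ha0, abs_of_nonpos hb0] <;> linarith
    rwa [h.eq_of_mem hmem, add_sub_cancel_left]

end IsNearest

/-! ### Fast2Sum and sloppy addition -/

namespace IsRN

variable {RN : ℝ → ℝ}

lemma isNearest (h : IsRN p RN) (x : ℝ) : IsNearest p x (RN x) := ⟨h.1 x, h.2 x⟩

lemma eq_self (h : IsRN p RN) (hx : x ∈ Fp p) : RN x = x := (h.isNearest x).eq_of_mem hx

lemma fast2Sum_eq_add (hp : p ≠ 0) (h : IsRN p RN) (ha : a ∈ Fp p) (hb : b ∈ Fp p)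
    (hab : a = 0 ∨ |b| ≤ |a|) : RN (a + b) + RN (b - RN (RN (a + b) - a)) = a + b := by
  have hnear := h.isNearest (a + b)
  have hsub : RN (a + b) - a ∈ Fp p := by
    rcases hab with rfl | hba
    · rw [zero_add, h.eq_self hb, sub_zero]
      exact hb
    · exact hnear.sub_mem_Fp_of_abs_le ha hb hba
  rw [h.eq_self hsub, show b - (RN (a + b) - a) = a + b - RN (a + b) by ring,
    h.eq_self (hnear.add_sub_mem_Fp hp ha hb), add_sub_cancel]

lemma sloppyAdd_fst_add_snd {xh xl yh yl : ℝ} (hp : p ≠ 0) (h : IsRN p RN) (hxh : xh ∈ Fp p)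
    (hyh : yh ∈ Fp p) (hsh : xh + yh ∈ Fp p) (hlow : xh + yh = 0 ∨ |xl + yl| ≤ |xh + yh|) :
    (sloppyAdd RN xh xl yh yl).1 + (sloppyAdd RN xh xl yh yl).2 = xh + yh + RN (xl + yl) := by
  have hv : xh + yh = 0 ∨ |RN (xl + yl)| ≤ |xh + yh| :=
    hlow.imp_right ((h.isNearest _).abs_le (abs_mem_Fp hsh))
  simpa only [sloppyAdd, h.eq_self hsh, add_sub_cancel_right, add_sub_cancel_left, h.eq_self hxh,
    h.eq_self hyh, sub_self, h.eq_self (zero_mem_Fp p), add_zero, zero_add, h.eq_self (h.1 _)]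
    using h.fast2Sum_eq_add hp hsh (h.1 (xl + yl)) hv

end IsRN

end

theorem sloppy_relerr_le_u_of_not_consecutive_general {p : ℕ} {RN : ℝ → ℝ}
    (hRN : IsRN p RN) {xh xl yh yl : ℝ} (hnx : RN (xh + xl) = xh) (hny : RN (yh + yl) = yh)
    (hsign : xh * yh < 0) (hr : max |xh| |yh| / 2 ≤ min |xh| |yh|)
    (hnotconsec : |xh| = |yh| ∨ ∃ f ∈ Fp p, min |xh| |yh| < f ∧ f < max |xh| |yh|) :
    |(sloppyAdd RN xh xl yh yl).1 + (sloppyAdd RN xh xl yh yl).2 -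
        (xh + xl + yh + yl)| ≤ (2 : ℝ) ^ (-(p : ℤ)) * |xh + xl + yh + yl| := by
  have hx : IsNearest p (xh + xl) xh := by simpa only [hnx] using hRN.isNearest (xh + xl)
  have hy : IsNearest p (yh + yl) yh := by simpa only [hny] using hRN.isNearest (yh + yl)
  have hp : p ≠ 0 := ne_zero_of_mem_Fp hx.1 (left_ne_zero_of_mul hsign.ne)
  obtain ⟨hxy, hyx⟩ : |xh| ≤ 2 * |yh| ∧ |yh| ≤ 2 * |xh| := by
    constructor <;> linarith [le_max_left |xh| |yh|, le_max_right |xh| |yh|,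
      min_le_left |xh| |yh|, min_le_right |xh| |yh|]
  have hsh : xh + yh ∈ Fp p := add_mem_Fp_of_mul_nonpos hx.1 hy.1 hsign.le hxy hyx
  obtain ⟨hlow, hle⟩ := hx.abs_error_le_of_not_consecutive hy hsign hxy hyx hnotconsec
  rw [show xh + xl + (yh + yl) - (xh + yh) = xl + yl by ring] at hlow hle
  calc _ = |RN (xl + yl) - (xl + yl)| := by
        rw [hRN.sloppyAdd_fst_add_snd hp hx.1 hy.1 hsh hlow]
        ring_nf
    _ ≤ 2 ^ (-(p : ℤ)) * |xl + yl| := (hRN.isNearest _).abs_sub_le_mul_abs hp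
    _ ≤ 2 ^ (-(p : ℤ)) * |xh + xl + yh + yl| := by rw [add_assoc _ yh]; gcongr

theorem sloppy_relerr_le_u_of_not_consecutive
    (p : ℕ) (hp : 6 ≤ p) (u : ℝ) (hu : u = (2 : ℝ) ^ (-(p : ℤ)))
    (RN : ℝ → ℝ) (hRN : IsRN p RN) (hsym : SymRN RN)
    (hties : TiesToEven p RN ∨ TiesToAway p RN)
    (xh xl yh yl : ℝ)
    (hxh : xh ∈ Fp p) (hxl : xl ∈ Fp p) (hyh : yh ∈ Fp p) (hyl : yl ∈ Fp p)
    (hnx : RN (xh + xl) = xh) (hny : RN (yh + yl) = yh)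
    (hsign : xh * yh < 0)
    (hr : max |xh| |yh| / 2 < min |xh| |yh|)
    (hnotconsec : |xh| = |yh| ∨
      ∃ f ∈ Fp p, min |xh| |yh| < f ∧ f < max |xh| |yh|) :
    |(sloppyAdd RN xh xl yh yl).1 + (sloppyAdd RN xh xl yh yl).2 -
        (xh + xl + yh + yl)| ≤ u * |xh + xl + yh + yl| :=
  hu ▸ sloppy_relerr_le_u_of_not_consecutive_general hRN hnx hny hsign hr.le hnotconsec
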